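/- arXiv:2012.14146 — 2 statements merged into one kernel-verified Lean document; each statement's English description precedes it below -/
import Mathlib

section
/- Let s₁ ∈ [0,2] and b ∈ ℝ. For every τ ∈ (0,1], every s ∈ [-τ, τ], and every sequence (F_n)_{n∈ℤ} of functions in H^{s₁}(𝕋) with only finitely many nonzero terms, one has ‖((e^{-is∂_x²} − 1) Π_τ F_n)_{n∈ℤ}‖_{X^{0,b}_τ} ≤ τ^{s₁/2} ‖(F_n)‖_{X^{s₁,b}_τ}. -/
noncomputable section

open MeasureTheory Complex Filter Topology AddCircle
open scoped ENNReal

abbrev Torus := AddCircle (2 * Real.pi)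

instance : Fact (0 < 2 * Real.pi) := ⟨by positivity⟩

/-- Japanese bracket `⟨x⟩ = (1+|x|²)^{1/2}`. -/
def jbr (x : ℝ) : ℝ := Real.sqrt (1 + x ^ 2)

/-- The Sobolev `H^s` norm on the torus, via Fourier coefficients. -/
def hsNorm (s : ℝ) (f : Torus → ℂ) : ℝ :=
  Real.sqrt (∑' k : ℤ, jbr k ^ (2 * s) * ‖fourierCoeff f k‖ ^ 2)

/-- Membership in `H^s(𝕋)` (as a function): square integrable with finite `H^s` norm. -/
def InHs (s : ℝ) (f : Torus → ℂ) : Prop :=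
  MemLp f 2 haarAddCircle ∧ Summable fun k : ℤ => jbr k ^ (2 * s) * ‖fourierCoeff f k‖ ^ 2

/-- The frequency cutoff `Π_τ`, keeping the Fourier modes `|k| ≤ τ^{-1/2}`. -/
def projC (τ : ℝ) (f : Torus → ℂ) : Torus → ℂ := fun x =>
  ∑' k : ℤ, if |(k : ℝ)| ≤ τ ^ (-(1 : ℝ) / 2) then fourierCoeff f k * fourier k x else 0

/-- The free Schrödinger group `e^{it∂_x²}`, given by the Fourier multiplier `e^{-itk²}`. -/
def schrod (t : ℝ) (f : Torus → ℂ) : Torus → ℂ := fun x =>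
  ∑' k : ℤ, Complex.exp (-Complex.I * t * (k : ℂ) ^ 2) * fourierCoeff f k * fourier k x

/-- Continuity on `I` with values in `L²(𝕋)`. -/
def ContL2On (I : Set ℝ) (u : ℝ → Torus → ℂ) : Prop :=
  (∀ t ∈ I, MemLp (u t) 2 haarAddCircle) ∧
  ∀ t ∈ I, Tendsto (fun t' => eLpNorm (u t' - u t) 2 haarAddCircle) (nhdsWithin t I) (nhds 0)

/-- Continuity on `I` with values in `H^s(𝕋)`. -/
def ContHsOn (s : ℝ) (I : Set ℝ) (u : ℝ → Torus → ℂ) : Prop :=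
  (∀ t ∈ I, InHs s (u t)) ∧
  ∀ t ∈ I, Tendsto (fun t' => hsNorm s (u t' - u t)) (nhdsWithin t I) (nhds 0)

/-- The cubic nonlinearity `|f|² f` (pointwise). -/
def cubic (f : Torus → ℂ) : Torus → ℂ := fun x => (‖f x‖ : ℂ) ^ 2 * f x

/-- The filtered cubic nonlinearity `Π_τ(|Π_τ f|² Π_τ f)`. -/
def projCubic (τ : ℝ) (f : Torus → ℂ) : Torus → ℂ := projC τ (cubic (projC τ f))

/-- `v` is the (global-in-time) mild solution of the projected equation
`i∂_t v = -∂_x² v - μ Π_τ(|Π_τ v|² Π_τ v)`, `v(0) = Π_τ u₀`. -/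
def IsProjSolution (μ τ : ℝ) (u₀ : Torus → ℂ) (v : ℝ → Torus → ℂ) : Prop :=
  ContL2On Set.univ v ∧
  ∀ t : ℝ, ∀ x : Torus,
    v t x = schrod t (projC τ u₀) x
      + Complex.I * μ * ∫ s in (0 : ℝ)..t, schrod (t - s) (projCubic τ (v s)) x

/-- The cubic NLS `i∂_t u = -∂_x² u - μ |u|² u` holds in the sense of space-time
distributions on `(0,T) × 𝕋` (tested against `ψ(t) e^{-ikx}`). -/
def DistribSolOn (μ T : ℝ) (u : ℝ → Torus → ℂ) : Prop :=
  ∀ k : ℤ, ∀ ψ : ℝ → ℂ, ContDiff ℝ (⊤ : ℕ∞) ψ → tsupport ψ ⊆ Set.Ioo 0 T →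
    -Complex.I * ∫ t : ℝ, deriv ψ t * fourierCoeff (u t) k
      = (k : ℂ) ^ 2 * ∫ t : ℝ, ψ t * fourierCoeff (u t) k
        - (μ : ℂ) * ∫ t : ℝ, ψ t * fourierCoeff (cubic (u t)) k

/-- `u ∈ L⁴((0,T) × 𝕋)`. -/
def SpaceTimeL4 (T : ℝ) (u : ℝ → Torus → ℂ) : Prop :=
  MemLp (fun p : ℝ × Torus => u p.1 p.2) 4
    ((volume.restrict (Set.Ioo 0 T)).prod haarAddCircle)

/-- Space-time Fourier transform `ṽ(σ,k)` of `v : ℝ × 𝕋 → ℂ`. -/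
def stFT (v : ℝ → Torus → ℂ) (σ : ℝ) (k : ℤ) : ℂ :=
  ∫ t : ℝ, Complex.exp (-Complex.I * σ * t) * fourierCoeff (v t) k

/-- The (continuous) Bourgain `X^{s,b}` norm, valued in `ℝ≥0∞`. -/
def XcNorm (s b : ℝ) (v : ℝ → Torus → ℂ) : ℝ≥0∞ :=
  (∫⁻ σ : ℝ, ∑' k : ℤ,
      ENNReal.ofReal ((1 + |(k : ℝ)|) ^ (2 * s) * (1 + |σ + (k : ℝ) ^ 2|) ^ (2 * b)
        * ‖stFT v σ k‖ ^ 2)) ^ (1 / 2 : ℝ)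

/-- The restriction norm `‖u‖_{X^{s,b}(T)}` is bounded by `M`: some extension of `u`
from `(0,T)` has `X^{s,b}` norm at most `M`. -/
def XresBounded (s b T : ℝ) (u : ℝ → Torus → ℂ) (M : ℝ≥0∞) : Prop :=
  ∃ v : ℝ → Torus → ℂ, (∀ t ∈ Set.Ioo 0 T, v t = u t) ∧ XcNorm s b v ≤ M

/-- `u` is a Bourgain-class solution of cubic NLS on `[0,T]` with datum `u₀`. -/
def IsNLSSolution (μ T : ℝ) (u₀ : Torus → ℂ) (u : ℝ → Torus → ℂ) : Prop :=
  ContL2On (Set.Icc 0 T) u ∧ SpaceTimeL4 T u ∧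
  (∃ b ∈ Set.Ioo (1 / 2 : ℝ) (5 / 8 : ℝ), ∃ v : ℝ → Torus → ℂ,
      (∀ t ∈ Set.Ioo 0 T, v t = u t) ∧ XcNorm 0 b v < ⊤) ∧
  u 0 = u₀ ∧ DistribSolOn μ T u

/-- One step of the pointwise nonlinear flow `e^{iμτ|Π_τ f|²} Π_τ f`. -/
def lieFlow (μ τ : ℝ) (f : Torus → ℂ) : Torus → ℂ := fun x =>
  Complex.exp (Complex.I * μ * τ * (‖projC τ f x‖ : ℂ) ^ 2) * projC τ f x

/-- The filtered Lie splitting scheme `u⁰ = Π_τ u₀`,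
`u^{n+1} = e^{iτ∂_x²} Π_τ (e^{iμτ|Π_τ uⁿ|²} Π_τ uⁿ)`. -/
def lieScheme (μ τ : ℝ) (u₀ : Torus → ℂ) : ℕ → Torus → ℂ
  | 0 => projC τ u₀
  | n + 1 => schrod τ (projC τ (lieFlow μ τ (lieScheme μ τ u₀ n)))

/-- `d_τ(σ) = (e^{iτσ}-1)/τ`. -/
def dtau (τ σ : ℝ) : ℂ := (Complex.exp (Complex.I * τ * σ) - 1) / τ

/-- The discrete Bourgain `X^{s,b}_τ` norm of a sequence of functions on the torus. -/
def XdNorm (τ s b : ℝ) (u : ℤ → Torus → ℂ) : ℝ :=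
  Real.sqrt (∫ σ in Set.Ioc (-(Real.pi / τ)) (Real.pi / τ),
    ∑' k : ℤ, jbr k ^ (2 * s) * jbr ‖dtau τ (σ - (k : ℝ) ^ 2)‖ ^ (2 * b) *
      ‖(τ : ℂ) * ∑' m : ℤ, fourierCoeff (u m) k * Complex.exp (Complex.I * m * τ * σ)‖ ^ 2)

/-- The discrete space-time Lebesgue norm `‖(u_n)‖_{ℓ^p_τ L^q}`. -/
def lpLqNorm (τ p q : ℝ) (u : ℤ → Torus → ℂ) : ℝ :=
  (τ * ∑' n : ℤ, (eLpNorm (u n) (ENNReal.ofReal q) haarAddCircle).toReal ^ p) ^ (1 / p)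

/-!
On the Fourier side `(e^{-is∂ₓ²} - 1) Π_τ` is multiplication by `e^{isk²} - 1` on `|k| ≤ τ^{-1/2}`.
There `|e^{isk²} - 1| ≤ τk² ≤ 1`, so lowering the exponent of `τk²` from `1` to `s₁/2 ∈ [0, 1]` only
increases it: the symbol is at most `(τk²)^{s₁/2} ≤ τ^{s₁/2}⟨k⟩^{s₁}`. Since a Fourier multiplier in
`x` acts diagonally on the space-time transform, this bound on the symbol is a bound between
`X^{s,b}_τ` norms.
-/

section JapaneseBracket

theorem jbr_zero : jbr 0 = 1 := by
  simp [jbr]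

theorem one_le_jbr (x : ℝ) : 1 ≤ jbr x :=
  Real.one_le_sqrt.2 (le_add_of_nonneg_right (sq_nonneg x))

theorem jbr_pos (x : ℝ) : 0 < jbr x :=
  one_pos.trans_le (one_le_jbr x)

theorem jbr_le_jbr {x y : ℝ} (h : |x| ≤ |y|) : jbr x ≤ jbr y :=
  Real.sqrt_le_sqrt (add_le_add_right (sq_le_sq.2 h) 1)

theorem abs_le_jbr (x : ℝ) : |x| ≤ jbr x :=
  Real.abs_le_sqrt (le_add_of_nonneg_left zero_le_one)

theorem continuous_jbr : Continuous jbr := by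
  unfold jbr
  fun_prop

theorem jbr_rpow_two_mul (x s : ℝ) : jbr x ^ (2 * s) = (jbr x ^ s) ^ 2 := by
  rw [mul_comm, Real.rpow_mul (jbr_pos x).le, Real.rpow_two]

end JapaneseBracket

section FourierSeries

variable {T : ℝ} {a b : ℤ → ℂ}

/-- The sum of the trigonometric series `∑ₖ aₖ e^{2πikx/T}`, evaluated pointwise; it has the junk
value `0` where the series does not converge unconditionally. -/
def fourierSum (a : ℤ → ℂ) : AddCircle T → ℂ := fun x => ∑' k : ℤ, a k * fourier k x

theorem norm_mul_fourier_apply (c : ℂ) (k : ℤ) (x : AddCircle T) : ‖c * fourier k x‖ = ‖c‖ := by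
  rw [norm_mul, fourier_apply, Circle.norm_coe, mul_one]

theorem fourierSum_sub (ha : Summable a) (hb : Summable b) :
    (fourierSum a - fourierSum b : AddCircle T → ℂ) = fourierSum fun k => a k - b k := by
  have summable_mul_fourier {c : ℤ → ℂ} (hc : Summable c) (x : AddCircle T) :
      Summable fun k => c k * fourier k x :=
    .of_norm <| by simpa only [norm_mul_fourier_apply] using hc.norm
  ext x
  simp only [fourierSum, Pi.sub_apply, sub_mul]
  exact ((summable_mul_fourier ha x).tsum_sub (summable_mul_fourier hb x)).symm

theorem fourierCoeff_fourierSum [Fact (0 < T)] (ha : Summable a) (n : ℤ) :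
    fourierCoeff (fourierSum a : AddCircle T → ℂ) n = a n := by
  have integrable_term (k : ℤ) :
      Integrable (fun x : AddCircle T => fourier (-n) x • (a k * fourier k x)) haarAddCircle :=
    (by fun_prop : Continuous _).integrable_of_hasCompactSupport (.of_compactSpace _)
  have norm_term (k : ℤ) (x : AddCircle T) : ‖fourier (-n) x • (a k * fourier k x)‖ = ‖a k‖ := by
    rw [smul_eq_mul, mul_comm, norm_mul_fourier_apply, norm_mul_fourier_apply]
  have summable_integral_norm : Summable fun k =>
      ∫ x : AddCircle T, ‖fourier (-n) x • (a k * fourier k x)‖ ∂haarAddCircle := by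
    simpa only [norm_term, integral_const, probReal_univ, one_smul] using ha.norm
  calc fourierCoeff (fourierSum a : AddCircle T → ℂ) n
      = ∫ x : AddCircle T, ∑' k, fourier (-n) x • (a k * fourier k x) ∂haarAddCircle := by
        simp only [fourierCoeff, fourierSum, smul_eq_mul, tsum_mul_left]
    _ = ∑' k, fourierCoeff (fun x : AddCircle T => a k * fourier k x) n :=
        (integral_tsum_of_summable_integral_norm integrable_term summable_integral_norm).symm
    _ = a n := by
        simp only [fourierCoeff.const_mul, fourierCoeff_fourier]
        rw [tsum_eq_single n fun k hk => by simp [hk.symm], Pi.single_eq_same, mul_one]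

end FourierSeries

section CutoffPropagator

theorem finite_setOf_abs_intCast_le (N : ℝ) : {k : ℤ | |(k : ℝ)| ≤ N}.Finite := by
  have := (isCompact_closedBall (0 : ℤ) N).finite_of_discrete
  simpa only [Metric.closedBall, Int.dist_eq, Int.cast_zero, sub_zero] using this

theorem summable_of_eq_zero_of_lt_abs {a : ℤ → ℂ} {N : ℝ}
    (ha : ∀ k : ℤ, N < |(k : ℝ)| → a k = 0) : Summable a :=
  summable_of_hasFiniteSupport <| (finite_setOf_abs_intCast_le N).subset fun k hk =>
    not_lt.1 (mt (ha k) hk)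

theorem projC_eq_fourierSum (τ : ℝ) (f : Torus → ℂ) :
    projC τ f = fourierSum fun k : ℤ =>
      if |(k : ℝ)| ≤ τ ^ (-(1 : ℝ) / 2) then fourierCoeff f k else 0 := by
  ext x
  simp only [projC, fourierSum, ite_mul, zero_mul]

theorem fourierCoeff_projC (τ : ℝ) (f : Torus → ℂ) (k : ℤ) :
    fourierCoeff (projC τ f) k =
      if |(k : ℝ)| ≤ τ ^ (-(1 : ℝ) / 2) then fourierCoeff f k else 0 := by
  rw [projC_eq_fourierSum,
    fourierCoeff_fourierSum (summable_of_eq_zero_of_lt_abs fun k hk => if_neg hk.not_ge)]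

/-- The symbol `1_{|k| ≤ τ^{-1/2}} (e^{-itk²} - 1)` of the Fourier multiplier
`(e^{it∂ₓ²} - 1) Π_τ`. -/
def propagatorSubOneSymbol (τ t : ℝ) (k : ℤ) : ℂ :=
  if |(k : ℝ)| ≤ τ ^ (-(1 : ℝ) / 2) then exp (-I * t * (k : ℂ) ^ 2) - 1 else 0

theorem fourierCoeff_schrod_projC_sub_projC (τ t : ℝ) (f : Torus → ℂ) (k : ℤ) :
    fourierCoeff (schrod t (projC τ f) - projC τ f) k =
      propagatorSubOneSymbol τ t k * fourierCoeff f k := by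
  set c : ℤ → ℂ := fourierCoeff (projC τ f)
  have c_eq (k : ℤ) : c k = if |(k : ℝ)| ≤ τ ^ (-(1 : ℝ) / 2) then fourierCoeff f k else 0 :=
    fourierCoeff_projC τ f k
  have c_eq_zero (k : ℤ) (hk : τ ^ (-(1 : ℝ) / 2) < |(k : ℝ)|) : c k = 0 :=
    (c_eq k).trans (if_neg hk.not_ge)
  have projC_eq : projC τ f = fourierSum c := by
    rw [projC_eq_fourierSum, funext c_eq]
  have schrod_eq : schrod t (projC τ f) =
      fourierSum fun k => exp (-I * t * (k : ℂ) ^ 2) * c k := rfl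
  have summable_c : Summable c := summable_of_eq_zero_of_lt_abs c_eq_zero
  have summable_exp_mul_c : Summable fun k : ℤ => exp (-I * t * (k : ℂ) ^ 2) * c k :=
    summable_of_eq_zero_of_lt_abs fun k hk => by rw [c_eq_zero k hk, mul_zero]
  rw [schrod_eq, projC_eq, fourierSum_sub summable_exp_mul_c summable_c,
    fourierCoeff_fourierSum (summable_exp_mul_c.sub summable_c), c_eq, propagatorSubOneSymbol]
  split_ifs <;> ring

theorem mul_sq_le_one_of_abs_le_rpow {τ ξ : ℝ} (hτ : 0 ≤ τ) (hξ : |ξ| ≤ τ ^ (-(1 : ℝ) / 2)) :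
    τ * ξ ^ 2 ≤ 1 := by
  have hξ_sq : ξ ^ 2 ≤ τ⁻¹ :=
    calc ξ ^ 2 = |ξ| ^ 2 := (sq_abs ξ).symm
      _ ≤ (τ ^ (-(1 : ℝ) / 2)) ^ 2 := by gcongr
      _ = τ⁻¹ := by
        rw [← Real.rpow_mul_natCast hτ, ← Real.rpow_neg_one]
        norm_num
  exact (mul_le_mul_of_nonneg_left hξ_sq hτ).trans mul_inv_le_one

theorem norm_exp_mul_sq_sub_one_le {τ t r ξ : ℝ} (ht : |t| ≤ τ) (hξ : τ * ξ ^ 2 ≤ 1)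
    (hr : r ∈ Set.Icc (0 : ℝ) 2) :
    ‖exp (-I * t * (ξ : ℂ) ^ 2) - 1‖ ≤ τ ^ (r / 2) * jbr ξ ^ r := by
  have hτ : 0 ≤ τ := (abs_nonneg t).trans ht
  have sq_rpow_half : (ξ ^ 2) ^ (r / 2) = |ξ| ^ r := by
    rw [← sq_abs, ← Real.rpow_natCast_mul (abs_nonneg ξ), Nat.cast_ofNat,
      mul_div_cancel₀ r two_ne_zero]
  calc ‖exp (-I * t * (ξ : ℂ) ^ 2) - 1‖
      = ‖exp (I * ((-t * ξ ^ 2 : ℝ) : ℂ)) - 1‖ := by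
        push_cast
        ring_nf
    _ ≤ ‖-t * ξ ^ 2‖ := Real.norm_exp_I_mul_ofReal_sub_one_le
    _ = |t| * ξ ^ 2 := by rw [Real.norm_eq_abs, abs_mul, abs_neg, abs_sq]
    _ ≤ τ * ξ ^ 2 := by gcongr
    _ ≤ (τ * ξ ^ 2) ^ (r / 2) :=
        Real.self_le_rpow_of_le_one (by positivity) hξ (by linarith [hr.2])
    _ = τ ^ (r / 2) * |ξ| ^ r := by rw [Real.mul_rpow hτ (sq_nonneg ξ), sq_rpow_half]
    _ ≤ τ ^ (r / 2) * jbr ξ ^ r := by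
        gcongr
        exacts [hr.1, abs_le_jbr ξ]

theorem norm_propagatorSubOneSymbol_le {τ t r : ℝ} (ht : |t| ≤ τ) (hr : r ∈ Set.Icc (0 : ℝ) 2)
    (k : ℤ) : ‖propagatorSubOneSymbol τ t k‖ ≤ τ ^ (r / 2) * jbr k ^ r := by
  have hτ : 0 ≤ τ := (abs_nonneg t).trans ht
  unfold propagatorSubOneSymbol
  split_ifs with hk
  · exact_mod_cast norm_exp_mul_sq_sub_one_le ht (mul_sq_le_one_of_abs_le_rpow hτ hk) hr
  · rw [norm_zero]
    have := jbr_pos k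
    positivity

end CutoffPropagator

section DiscreteBourgainNorm

variable {τ r s b C σ : ℝ} {u v : ℤ → Torus → ℂ} {m : ℤ → ℂ}

/-- The space-time Fourier transform `ũ(σ, k) = τ ∑ₙ ûₙ(k) e^{inτσ}` of a sequence `(uₙ)` sampled
with time step `τ`. -/
def discreteFT (τ : ℝ) (u : ℤ → Torus → ℂ) (σ : ℝ) (k : ℤ) : ℂ :=
  τ * ∑' n : ℤ, fourierCoeff (u n) k * exp (I * n * τ * σ)

/-- The integrand `⟨k⟩^{2s} ⟨d_τ(σ - k²)⟩^{2b} |ũ(σ, k)|²` of the squared `X^{s,b}_τ` norm. -/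
def bourgainDensity (τ s b : ℝ) (u : ℤ → Torus → ℂ) (σ : ℝ) (k : ℤ) : ℝ :=
  jbr k ^ (2 * s) * jbr ‖dtau τ (σ - (k : ℝ) ^ 2)‖ ^ (2 * b) * ‖discreteFT τ u σ k‖ ^ 2

theorem XdNorm_eq_sqrt_integral_bourgainDensity (τ s b : ℝ) (u : ℤ → Torus → ℂ) :
    XdNorm τ s b u = √(∫ σ in Set.Ioc (-(Real.pi / τ)) (Real.pi / τ),
      ∑' k : ℤ, bourgainDensity τ s b u σ k) := rfl

theorem norm_exp_I_mul_int_mul_mul (n : ℤ) (τ σ : ℝ) : ‖exp (I * n * τ * σ)‖ = 1 := by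
  have := norm_exp_I_mul_ofReal (n * τ * σ)
  push_cast at this
  rwa [mul_assoc, mul_assoc, ← mul_assoc (n : ℂ)]

theorem discreteFT_eq_sum (hu : u.support.Finite) (τ σ : ℝ) (k : ℤ) :
    discreteFT τ u σ k = τ * ∑ n ∈ hu.toFinset, fourierCoeff (u n) k * exp (I * n * τ * σ) := by
  rw [discreteFT, tsum_eq_sum fun n hn => ?_]
  have hun : u n = 0 := by simpa using hn
  simp [hun, fourierCoeff]

theorem discreteFT_of_fourierCoeff_eq_mul
    (huv : ∀ n k, fourierCoeff (u n) k = m k * fourierCoeff (v n) k) (k : ℤ) :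
    discreteFT τ u σ k = m k * discreteFT τ v σ k := by
  simp only [discreteFT, huv, mul_assoc (m k), tsum_mul_left, mul_left_comm]

theorem sq_norm_discreteFT_le (hu : u.support.Finite) (k : ℤ) :
    ‖discreteFT τ u σ k‖ ^ 2 ≤
      τ ^ 2 * (hu.toFinset.card * ∑ n ∈ hu.toFinset, ‖fourierCoeff (u n) k‖ ^ 2) := by
  rw [discreteFT_eq_sum hu, norm_mul, mul_pow, norm_real, Real.norm_eq_abs, sq_abs]
  gcongr
  calc ‖∑ n ∈ hu.toFinset, fourierCoeff (u n) k * exp (I * n * τ * σ)‖ ^ 2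
      ≤ (∑ n ∈ hu.toFinset, ‖fourierCoeff (u n) k‖) ^ 2 := by
        gcongr
        refine (norm_sum_le _ _).trans_eq ?_
        simp only [norm_mul, norm_exp_I_mul_int_mul_mul, mul_one]
    _ ≤ hu.toFinset.card * ∑ n ∈ hu.toFinset, ‖fourierCoeff (u n) k‖ ^ 2 :=
        sq_sum_le_card_mul_sum_sq

theorem norm_dtau_le (τ x : ℝ) : ‖dtau τ x‖ ≤ 2 / |τ| := by
  have norm_exp : ‖exp (I * τ * x)‖ = 1 := by
    simpa [mul_assoc] using norm_exp_I_mul_ofReal (τ * x)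
  rw [dtau, norm_div, norm_real, Real.norm_eq_abs]
  gcongr
  calc ‖exp (I * τ * x) - 1‖ ≤ ‖exp (I * τ * x)‖ + ‖(1 : ℂ)‖ := norm_sub_le _ _
    _ = 2 := by rw [norm_exp, norm_one, one_add_one_eq_two]

theorem jbr_norm_dtau_rpow_le (τ b x : ℝ) :
    jbr ‖dtau τ x‖ ^ (2 * b) ≤ jbr (2 / τ) ^ (2 * |b|) := by
  have jbr_le : jbr ‖dtau τ x‖ ≤ jbr (2 / τ) :=
    jbr_le_jbr <| by simpa [abs_div] using norm_dtau_le τ x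
  calc jbr ‖dtau τ x‖ ^ (2 * b) ≤ jbr ‖dtau τ x‖ ^ (2 * |b|) :=
        Real.rpow_le_rpow_of_exponent_le (one_le_jbr _) (by linarith [le_abs_self b])
    _ ≤ jbr (2 / τ) ^ (2 * |b|) := Real.rpow_le_rpow (jbr_pos _).le jbr_le (by positivity)

theorem bourgainDensity_nonneg (τ s b : ℝ) (u : ℤ → Torus → ℂ) (σ : ℝ) (k : ℤ) :
    0 ≤ bourgainDensity τ s b u σ k :=
  mul_nonneg (mul_nonneg (Real.rpow_nonneg (jbr_pos _).le _) (Real.rpow_nonneg (jbr_pos _).le _))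
    (sq_nonneg _)

theorem continuous_bourgainDensity (hu : u.support.Finite) (k : ℤ) :
    Continuous fun σ => bourgainDensity τ s b u σ k := by
  have continuous_dtau : Continuous fun σ : ℝ => dtau τ (σ - (k : ℝ) ^ 2) := by
    simp only [dtau, div_eq_mul_inv]
    fun_prop
  have continuous_weight : Continuous fun σ : ℝ => jbr ‖dtau τ (σ - (k : ℝ) ^ 2)‖ ^ (2 * b) :=
    (continuous_jbr.comp continuous_dtau.norm).rpow_const fun _ => .inl (jbr_pos _).ne'
  simp only [bourgainDensity, discreteFT_eq_sum hu]
  fun_prop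

theorem bourgainDensity_le (hu : u.support.Finite) (k : ℤ) :
    bourgainDensity τ s b u σ k ≤ jbr (2 / τ) ^ (2 * |b|) * τ ^ 2 * hu.toFinset.card *
      ∑ n ∈ hu.toFinset, jbr k ^ (2 * s) * ‖fourierCoeff (u n) k‖ ^ 2 := by
  have := jbr_pos k
  have := jbr_pos (2 / τ)
  calc bourgainDensity τ s b u σ k
      ≤ jbr k ^ (2 * s) * jbr (2 / τ) ^ (2 * |b|) *
          (τ ^ 2 * (hu.toFinset.card * ∑ n ∈ hu.toFinset, ‖fourierCoeff (u n) k‖ ^ 2)) := by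
        unfold bourgainDensity
        gcongr
        exacts [jbr_norm_dtau_rpow_le τ b _, sq_norm_discreteFT_le hu k]
    _ = _ := by
        rw [← Finset.mul_sum]
        ring

theorem exists_summable_norm_bourgainDensity_le (hu : u.support.Finite)
    (hus : ∀ n, Summable fun k : ℤ => jbr k ^ (2 * s) * ‖fourierCoeff (u n) k‖ ^ 2) :
    ∃ B : ℤ → ℝ, Summable B ∧ ∀ k σ, ‖bourgainDensity τ s b u σ k‖ ≤ B k :=
  ⟨_, (summable_sum fun n _ => hus n).mul_left _, fun k σ =>
    (Real.norm_of_nonneg (bourgainDensity_nonneg τ s b u σ k)).trans_le (bourgainDensity_le hu k)⟩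

theorem summable_bourgainDensity (hu : u.support.Finite)
    (hus : ∀ n, Summable fun k : ℤ => jbr k ^ (2 * s) * ‖fourierCoeff (u n) k‖ ^ 2) :
    Summable (bourgainDensity τ s b u σ) := by
  obtain ⟨B, hB, norm_le⟩ := exists_summable_norm_bourgainDensity_le (τ := τ) (b := b) hu hus
  exact hB.of_norm_bounded fun k => norm_le k σ

theorem continuous_tsum_bourgainDensity (hu : u.support.Finite)
    (hus : ∀ n, Summable fun k : ℤ => jbr k ^ (2 * s) * ‖fourierCoeff (u n) k‖ ^ 2) :
    Continuous fun σ => ∑' k, bourgainDensity τ s b u σ k := by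
  obtain ⟨B, hB, norm_le⟩ := exists_summable_norm_bourgainDensity_le (τ := τ) (b := b) hu hus
  exact continuous_tsum (continuous_bourgainDensity hu) hB norm_le

theorem bourgainDensity_le_of_fourierCoeff_eq_mul
    (huv : ∀ n k, fourierCoeff (u n) k = m k * fourierCoeff (v n) k)
    (hm : ∀ k : ℤ, ‖m k‖ * jbr k ^ r ≤ C * jbr k ^ s) (k : ℤ) :
    bourgainDensity τ r b u σ k ≤ C ^ 2 * bourgainDensity τ s b v σ k := by
  have := jbr_pos k
  have := jbr_pos ‖dtau τ (σ - (k : ℝ) ^ 2)‖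
  simp only [bourgainDensity, discreteFT_of_fourierCoeff_eq_mul huv, norm_mul, jbr_rpow_two_mul k]
  set w := jbr ‖dtau τ (σ - (k : ℝ) ^ 2)‖ ^ (2 * b)
  calc (jbr k ^ r) ^ 2 * w * (‖m k‖ * ‖discreteFT τ v σ k‖) ^ 2
      = (‖m k‖ * jbr k ^ r) ^ 2 * (w * ‖discreteFT τ v σ k‖ ^ 2) := by ring
    _ ≤ (C * jbr k ^ s) ^ 2 * (w * ‖discreteFT τ v σ k‖ ^ 2) := by
        gcongr ?_ ^ 2 * _
        exact hm k
    _ = C ^ 2 * ((jbr k ^ s) ^ 2 * w * ‖discreteFT τ v σ k‖ ^ 2) := by ring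

theorem XdNorm_le_of_fourierCoeff_eq_mul (hv : v.support.Finite)
    (hvs : ∀ n, Summable fun k : ℤ => jbr k ^ (2 * s) * ‖fourierCoeff (v n) k‖ ^ 2)
    (huv : ∀ n k, fourierCoeff (u n) k = m k * fourierCoeff (v n) k)
    (hm : ∀ k : ℤ, ‖m k‖ * jbr k ^ r ≤ C * jbr k ^ s) :
    XdNorm τ r b u ≤ C * XdNorm τ s b v := by
  have hC : 0 ≤ C :=
    (norm_nonneg (m 0)).trans (by simpa [jbr_zero] using hm 0)
  have density_le (σ : ℝ) (k : ℤ) :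
      bourgainDensity τ r b u σ k ≤ C ^ 2 * bourgainDensity τ s b v σ k :=
    bourgainDensity_le_of_fourierCoeff_eq_mul huv hm k
  have tsum_le (σ : ℝ) :
      ∑' k, bourgainDensity τ r b u σ k ≤ C ^ 2 * ∑' k, bourgainDensity τ s b v σ k := by
    have summable_v : Summable fun k => C ^ 2 * bourgainDensity τ s b v σ k :=
      (summable_bourgainDensity hv hvs).mul_left (C ^ 2)
    have summable_u : Summable (bourgainDensity τ r b u σ) :=
      summable_v.of_nonneg_of_le (bourgainDensity_nonneg τ r b u σ) (density_le σ)
    rw [← tsum_mul_left]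
    exact summable_u.tsum_le_tsum (density_le σ) summable_v
  calc XdNorm τ r b u
      ≤ √(∫ σ in Set.Ioc (-(Real.pi / τ)) (Real.pi / τ),
          C ^ 2 * ∑' k, bourgainDensity τ s b v σ k) := by
        refine Real.sqrt_le_sqrt (integral_mono_of_nonneg ?_ ?_ (.of_forall tsum_le))
        · exact .of_forall fun σ => tsum_nonneg (bourgainDensity_nonneg τ r b u σ)
        · exact ((continuous_tsum_bourgainDensity hv hvs).const_mul (C ^ 2)).integrableOn_Ioc
    _ = C * XdNorm τ s b v := by
        rw [integral_const_mul, Real.sqrt_mul (sq_nonneg C), Real.sqrt_sq hC,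
          XdNorm_eq_sqrt_integral_bourgainDensity]

end DiscreteBourgainNorm

/-- The frequency-localized smoothing bound
`‖((e^{-is∂_x²} - 1) Π_τ F_n)‖_{X^{0,b}_τ} ≤ τ^{s₁/2} ‖(F_n)‖_{X^{s₁,b}_τ}`
for `s₁ ∈ [0,2]`, `|s| ≤ τ`. -/
theorem projector_commutator_bound (s₁ : ℝ) (hs₁ : s₁ ∈ Set.Icc (0 : ℝ) 2) (b : ℝ) :
    ∀ τ ∈ Set.Ioc (0 : ℝ) 1, ∀ s ∈ Set.Icc (-τ) τ, ∀ F : ℤ → Torus → ℂ,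
      (∀ n, InHs s₁ (F n)) → {n : ℤ | F n ≠ 0}.Finite →
      XdNorm τ 0 b (fun n => schrod (-s) (projC τ (F n)) - projC τ (F n))
        ≤ τ ^ (s₁ / 2) * XdNorm τ s₁ b F := by
  intro τ _ s hs F hF hfin
  have symbol_le (k : ℤ) :
      ‖propagatorSubOneSymbol τ (-s) k‖ * jbr k ^ (0 : ℝ) ≤ τ ^ (s₁ / 2) * jbr k ^ s₁ := by
    rw [Real.rpow_zero, mul_one]
    exact norm_propagatorSubOneSymbol_le ((abs_neg s).trans_le (abs_le.2 hs)) hs₁ k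
  exact XdNorm_le_of_fourierCoeff_eq_mul hfin (fun n => (hF n).2)
    (fun n => fourierCoeff_schrod_projC_sub_projC τ (-s) (F n)) symbol_le
end
end

section
/- Let τ > 0, μ ∈ {1,-1}, and define Ψ : ℂ → ℂ by Ψ(z) = ((e^{iμτ|z|²} − 1)/(iμτ)) · z. Then for all w, e ∈ ℂ one has |Ψ(w) − Ψ(w − e)| ≤ 3(|w|²|e| + |w||e|² + |e|³). -/
noncomputable section

open MeasureTheory Complex Filter Topology AddCircle
open scoped ENNReal

/-!
With `c = μτ`, the map `Ψ` is `z ↦ φ(|z|²) z` for `φ(s) = (e^{ics} - 1) / (ic)`. Since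
`a ↦ e^{ia}` is 1-Lipschitz on `ℝ`, so is `φ`, uniformly in `c`. Together with `φ(0) = 0` this gives
`|Ψ(x) - Ψ(y)| ≤ (|x|² + |x||y| + |y|²) |x - y|`, by splitting the difference as
`φ(|x|²)(x - y) + (φ(|x|²) - φ(|y|²)) y`; put `x = w`, `y = w - e`, `|y| ≤ |w| + |e|`.
-/

section GaugeInvariant

variable {R E : Type*} [SeminormedRing R] [SeminormedAddCommGroup E] [Module R E]
  [IsBoundedSMul R E]

lemma abs_norm_sq_sub_norm_sq_le (x y : E) :
    |‖x‖ ^ 2 - ‖y‖ ^ 2| ≤ (‖x‖ + ‖y‖) * ‖x - y‖ := by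
  rw [sq_sub_sq, abs_mul, abs_of_nonneg (by positivity : 0 ≤ ‖x‖ + ‖y‖)]
  gcongr
  exact abs_norm_sub_norm_le x y

lemma norm_comp_norm_sq_smul_sub_le {φ : ℝ → R} {K : NNReal} (hφ : LipschitzWith K φ)
    (hφ_zero : φ 0 = 0) (x y : E) :
    ‖φ (‖x‖ ^ 2) • x - φ (‖y‖ ^ 2) • y‖ ≤
      K * ((‖x‖ ^ 2 + ‖x‖ * ‖y‖ + ‖y‖ ^ 2) * ‖x - y‖) := by
  have norm_value : ‖φ (‖x‖ ^ 2)‖ ≤ K * ‖x‖ ^ 2 := by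
    have from_zero := hφ.norm_sub_le (‖x‖ ^ 2) 0
    rwa [hφ_zero, sub_zero, sub_zero, Real.norm_of_nonneg (sq_nonneg ‖x‖)] at from_zero
  have norm_variation : ‖φ (‖x‖ ^ 2) - φ (‖y‖ ^ 2)‖ ≤ K * ((‖x‖ + ‖y‖) * ‖x - y‖) :=
    (hφ.norm_sub_le _ _).trans (by gcongr; exact abs_norm_sq_sub_norm_sq_le x y)
  calc ‖φ (‖x‖ ^ 2) • x - φ (‖y‖ ^ 2) • y‖
      = ‖φ (‖x‖ ^ 2) • (x - y) + (φ (‖x‖ ^ 2) - φ (‖y‖ ^ 2)) • y‖ := by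
        rw [smul_sub, sub_smul, sub_add_sub_cancel]
    _ ≤ ‖φ (‖x‖ ^ 2)‖ * ‖x - y‖ + ‖φ (‖x‖ ^ 2) - φ (‖y‖ ^ 2)‖ * ‖y‖ :=
        norm_add_le_of_le (norm_smul_le _ _) (norm_smul_le _ _)
    _ ≤ K * ‖x‖ ^ 2 * ‖x - y‖ + K * ((‖x‖ + ‖y‖) * ‖x - y‖) * ‖y‖ := by gcongr
    _ = K * ((‖x‖ ^ 2 + ‖x‖ * ‖y‖ + ‖y‖ ^ 2) * ‖x - y‖) := by ring

end GaugeInvariant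

lemma norm_exp_I_mul_ofReal_sub_exp_I_mul_ofReal_le (a b : ℝ) :
    ‖exp (I * a) - exp (I * b)‖ ≤ |a - b| := by
  have factor : exp (I * a) - exp (I * b) = exp (I * b) * (exp (I * (a - b : ℝ)) - 1) := by
    rw [mul_sub, ← exp_add, mul_one, ofReal_sub, ← mul_add, add_sub_cancel]
  rw [factor, norm_mul, norm_exp_I_mul_ofReal, one_mul]
  exact Real.norm_exp_I_mul_ofReal_sub_one_le

/-- The difference quotient `(e^{ics} - 1) / (ic)` of the phase, equal to `∫₀ˢ e^{icr} dr` when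
`c ≠ 0`; for `c = 0` it has the junk value `0` instead of the limit `s`. -/
def phaseQuotient (c s : ℝ) : ℂ := (exp (I * c * s) - 1) / (I * c)

lemma phaseQuotient_zero_right (c : ℝ) : phaseQuotient c 0 = 0 := by
  simp [phaseQuotient]

lemma lipschitzWith_phaseQuotient {c : ℝ} (hc : c ≠ 0) : LipschitzWith 1 (phaseQuotient c) := by
  refine LipschitzWith.of_dist_le_mul fun s t ↦ ?_
  have phase_bound : ‖exp (I * c * s) - exp (I * c * t)‖ ≤ |s - t| * |c| := by
    simpa [mul_assoc, ← mul_sub, abs_mul, mul_comm |c|] using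
      norm_exp_I_mul_ofReal_sub_exp_I_mul_ofReal_le (c * s) (c * t)
  rw [dist_eq_norm, phaseQuotient, phaseQuotient, ← sub_div, sub_sub_sub_cancel_right, norm_div,
    norm_mul, norm_I, one_mul, norm_real, div_le_iff₀ (norm_pos_iff.mpr hc)]
  simpa [Real.dist_eq] using phase_bound

section NonlinearFlow

variable {E : Type*} [SeminormedAddCommGroup E] [NormedSpace ℂ E]

/-- The nonlinear flow map `Ψ(z) = ((e^{ic|z|²} - 1) / (ic)) z` of one Lie splitting step, with
`c = μτ` and with values in an arbitrary complex normed space. -/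
def lieNonlinearity (c : ℝ) (z : E) : E := phaseQuotient c (‖z‖ ^ 2) • z

lemma norm_lieNonlinearity_sub_le {c : ℝ} (hc : c ≠ 0) (x y : E) :
    ‖lieNonlinearity c x - lieNonlinearity c y‖ ≤
      (‖x‖ ^ 2 + ‖x‖ * ‖y‖ + ‖y‖ ^ 2) * ‖x - y‖ := by
  simpa [lieNonlinearity] using norm_comp_norm_sq_smul_sub_le (lipschitzWith_phaseQuotient hc)
    (phaseQuotient_zero_right c) x y

theorem lie_flow_pointwise_estimate_general {c : ℝ} (hc : c ≠ 0) (w e : E) :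
    ‖lieNonlinearity c w - lieNonlinearity c (w - e)‖ ≤
      3 * (‖w‖ ^ 2 * ‖e‖ + ‖w‖ * ‖e‖ ^ 2 + ‖e‖ ^ 3) :=
  calc ‖lieNonlinearity c w - lieNonlinearity c (w - e)‖
      ≤ (‖w‖ ^ 2 + ‖w‖ * ‖w - e‖ + ‖w - e‖ ^ 2) * ‖e‖ := by
        simpa only [sub_sub_cancel] using norm_lieNonlinearity_sub_le hc w (w - e)
    _ ≤ (‖w‖ ^ 2 + ‖w‖ * (‖w‖ + ‖e‖) + (‖w‖ + ‖e‖) ^ 2) * ‖e‖ := by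
        gcongr <;> exact norm_sub_le w e
    _ = 3 * (‖w‖ ^ 2 * ‖e‖ + ‖w‖ * ‖e‖ ^ 2 + ‖e‖ ^ 3) - 2 * ‖e‖ ^ 3 := by ring
    _ ≤ 3 * (‖w‖ ^ 2 * ‖e‖ + ‖w‖ * ‖e‖ ^ 2 + ‖e‖ ^ 3) := sub_le_self _ (by positivity)

end NonlinearFlow

/-- Pointwise Lipschitz-type bound for the nonlinear flow
`Ψ(z) = ((e^{iμτ|z|²} - 1)/(iμτ)) z` of one step of the filtered Lie splitting:
`|Ψ(w) - Ψ(w-e)| ≤ 3(|w|²|e| + |w||e|² + |e|³)`. -/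
theorem lie_flow_pointwise_estimate (τ : ℝ) (hτ : 0 < τ) (μ : ℝ) (hμ : μ = 1 ∨ μ = -1)
    (w e : ℂ) :
    ‖(Complex.exp (Complex.I * μ * τ * (‖w‖ : ℂ) ^ 2) - 1) / (Complex.I * μ * τ) * w
        - (Complex.exp (Complex.I * μ * τ * (‖w - e‖ : ℂ) ^ 2) - 1) / (Complex.I * μ * τ)
            * (w - e)‖
      ≤ 3 * (‖w‖ ^ 2 * ‖e‖ + ‖w‖ * ‖e‖ ^ 2 + ‖e‖ ^ 3) := by
  have hμτ : μ * τ ≠ 0 := mul_ne_zero (by rcases hμ with rfl | rfl <;> norm_num) hτ.ne'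
  simpa [lieNonlinearity, phaseQuotient, mul_assoc] using
    lie_flow_pointwise_estimate_general hμτ w e
end
end
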